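/- Let X be a compact Hausdorff metric space of covering dimension ≤ 2(k' − k) − 1 where k' > k ≥ 1 are integers. Let 𝒲 be an open cover of X, and for each W ∈ 𝒲 let p_W : W → M_n(ℂ) be a continuous projection-valued map with rank p_W(x) ≥ k' for all x ∈ W. Then there exists a continuous projection-valued map p : X → M_n(ℂ) such that for all x ∈ X: rank p(x) ≥ k and p(x) ≤ ⋁{p_W(x) : W ∈ 𝒲, x ∈ W}. -/

import Mathlib

/-- `X` has Lebesgue covering dimension at most `d`: every open cover admits an
open refinement in which each point lies in at most `d + 1` sets. -/
def CoveringDimLE (X : Type*) [TopologicalSpace X] (d : ℕ) : Prop :=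
  ∀ U : Set (Set X), (∀ u ∈ U, IsOpen u) → ⋃₀ U = Set.univ →
    ∃ V : Set (Set X), (∀ v ∈ V, IsOpen v) ∧ ⋃₀ V = Set.univ ∧
      (∀ v ∈ V, ∃ u ∈ U, v ⊆ u) ∧
      ∀ x : X, {v ∈ V | x ∈ v}.Finite ∧ {v ∈ V | x ∈ v}.ncard ≤ d + 1

/-! By general position one builds `k` continuous vector fields which are linearly independent at
every point and take values in the joins of the ranges; `p` is the orthogonal projection onto their
span. Near each point the given maps contain a continuously varying `k'`-dimensional subspace, so
it suffices to perturb `k` functions with values in `ℂ ^ k'` on one chart after another, each time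
by so little that independence on the earlier charts survives.

For a single chart, approximate the functions by `∑ v, f v x • A v`, where `f` is a partition of
unity with at most `d + 1` members nonzero at each point and `d` is the covering dimension. The
coefficients `A` for which some nonzero real combination of at most `d + 1` of the `k`-tuples `A v`
is linearly dependent form a finite union of `C¹` images of spaces of smaller dimension, so they
can be avoided. -/

open Module Set Filter Topology
open scoped Matrix

section GeneralPosition

theorem dense_compl_iUnion_of_dimH_lt_finrank {E : Type*} [NormedAddCommGroup E]
    [NormedSpace ℝ E] [FiniteDimensional ℝ E] {ι : Type*} [Finite ι] {s : ι → Set E}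
    (hs : ∀ i, dimH (s i) < finrank ℝ E) : Dense (⋃ i, s i)ᶜ := by
  cases isEmpty_or_nonempty ι with
  | inl _ => simp
  | inr _ =>
    obtain ⟨i, hi⟩ := Finite.exists_max fun i => dimH (s i)
    refine dense_compl_of_dimH_lt_finrank ?_
    rw [dimH_iUnion]
    exact (iSup_le hi).trans_lt (hs i)

variable {𝕜 E : Type*} [RCLike 𝕜] [NormedAddCommGroup E] [NormedSpace 𝕜 E] [NormedSpace ℝ E]
  [IsScalarTower ℝ 𝕜 E]

theorem dimH_setOf_exists_sum_smul_eq_zero_lt [FiniteDimensional ℝ E] {Z I : Type*}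
    [NormedAddCommGroup Z] [NormedSpace ℝ Z] [FiniteDimensional ℝ Z] [Fintype I]
    {w : Z → I → 𝕜} (hw : ContDiff ℝ 1 w) {i₀ : I} (hw₀ : ∀ z, w z i₀ = 1)
    (hZ : finrank ℝ Z < finrank ℝ E) :
    dimH {A : I → E | ∃ z, ∑ i, w z i • A i = 0} < finrank ℝ (I → E) := by
  classical
  -- Since `w z i₀ = 1`, the relation determines `A i₀` from `z` and the other entries of `A`.
  let g : Z × ({i // i ≠ i₀} → E) → I → E := fun y i =>
    if h : i = i₀ then -∑ j : {i // i ≠ i₀}, w y.1 j • y.2 j else y.2 ⟨i, h⟩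
  have hw' : ∀ i, ContDiff ℝ 1 fun z => w z i := contDiff_pi.1 hw
  have hg : ContDiff ℝ 1 g := by
    refine contDiff_pi.2 fun i => ?_
    by_cases h : i = i₀
    · simp only [g, h, dif_pos]
      fun_prop
    · simp only [g, h, dif_neg, not_false_eq_true]
      fun_prop
  have hsub : {A : I → E | ∃ z, ∑ i, w z i • A i = 0} ⊆ range g := by
    rintro A ⟨z, hz⟩
    refine ⟨(z, fun j => A j), funext fun i => ?_⟩
    by_cases h : i = i₀
    · rw [Fintype.sum_eq_add_sum_subtype_ne _ i₀, hw₀, one_smul] at hz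
      simp only [g, h, dif_pos]
      exact (eq_neg_of_add_eq_zero_left hz).symm
    · simp only [g, h, dif_neg, not_false_eq_true]
  refine ((dimH_mono hsub).trans hg.dimH_range_le).trans_lt (Nat.cast_lt.2 ?_)
  have hI : 0 < Fintype.card I := Fintype.card_pos_iff.2 ⟨i₀⟩
  calc finrank ℝ (Z × ({i // i ≠ i₀} → E))
      = finrank ℝ Z + (Fintype.card I - 1) * finrank ℝ E := by
        simp [finrank_prod, finrank_pi_fintype]
    _ < (Fintype.card I - 1) * finrank ℝ E + finrank ℝ E := by omega
    _ = finrank ℝ (I → E) := by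
        rw [← Nat.succ_mul, Nat.succ_eq_add_one, Nat.sub_add_cancel hI]
        simp [finrank_pi_fintype]

open Classical in
/-- The vector with coordinates `u` on `s`, coordinate `1` at `a`, and `0` elsewhere. For `a ∉ s`
this is the standard affine chart of the projective space of vectors supported in `insert a s`; it
parametrizes linear relations up to scaling. -/
noncomputable def affineChart {K α : Type*} [Zero K] [One K] (s : Set α) (a : α) (u : s → K) :
    α → K :=
  fun i => if h : i ∈ s then u ⟨i, h⟩ else if i = a then 1 else 0

theorem affineChart_self {K α : Type*} [Zero K] [One K] {s : Set α} {a : α} (ha : a ∉ s)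
    (u : s → K) : affineChart s a u a = 1 := by
  simp [affineChart, ha]

theorem contDiff_affineChart {α : Type*} [Fintype α] (s : Set α) [Fintype s] (a : α)
    {r : WithTop ℕ∞} : ContDiff ℝ r (affineChart s a : (s → 𝕜) → α → 𝕜) := by
  refine contDiff_pi.2 fun i => ?_
  by_cases h : i ∈ s
  · simp only [affineChart, h, dif_pos]
    fun_prop
  · simp only [affineChart, h, dif_neg, not_false_eq_true]
    fun_prop

theorem exists_affineChart_eq_inv_smul {K α : Type*} [DivisionRing K] {s : Set α} {a : α}
    {t : α → K} (ha : a ∉ s) (hts : Function.support t ⊆ insert a s) (hta : t a ≠ 0) :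
    ∃ u, affineChart s a u = (t a)⁻¹ • t := by
  refine ⟨fun j => (t a)⁻¹ * t j, funext fun j => ?_⟩
  by_cases hj : j ∈ s
  · simp [affineChart, hj]
  · by_cases hja : j = a
    · subst hja
      simp [affineChart, ha, hta]
    · have htj : t j = 0 := by
        by_contra h
        exact (hts h).elim hja hj
      simp [affineChart, hj, hja, htj]

variable (𝕜 E) in
/-- The families `A` with a relation `∑ (j, c), (x j • y c) • A (j, c) = 0` whose real factor `x`
is supported in `insert a s` with `x a = 1` and whose factor `y` over `𝕜` has `y l = 1`. For fixed
supports, these are the coefficients to be avoided by general position. -/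
def affineRelationSet {ι κ : Type*} [Fintype ι] [Fintype κ] (s : Set ι) (a : ι) (l : κ) :
    Set (ι × κ → E) :=
  {A | ∃ z : (s → ℝ) × (({l}ᶜ : Set κ) → 𝕜),
    ∑ i, (affineChart s a z.1 i.1 • affineChart {l}ᶜ l z.2 i.2) • A i = 0}

variable {ι κ : Type*} [Fintype ι] [Fintype κ]

theorem dimH_affineRelationSet_lt [FiniteDimensional ℝ E] {s : Set ι} {a : ι} (ha : a ∉ s) (l : κ)
    (hs : s.ncard + finrank ℝ 𝕜 * (Fintype.card κ - 1) < finrank ℝ E) :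
    dimH (affineRelationSet 𝕜 E s a l) < finrank ℝ (ι × κ → E) := by
  classical
  refine dimH_setOf_exists_sum_smul_eq_zero_lt (i₀ := (a, l)) ?_ ?_ ?_
  · refine contDiff_pi.2 fun i => ?_
    have h₁ := contDiff_pi.1 (contDiff_affineChart (𝕜 := ℝ) (r := 1) s a) i.1
    have h₂ := contDiff_pi.1 (contDiff_affineChart (𝕜 := 𝕜) (r := 1) {l}ᶜ l) i.2
    fun_prop
  · simp [affineChart_self, ha]
  · convert hs
    simp [finrank_prod, finrank_pi_fintype, ← Nat.card_coe_set_eq, Nat.card_eq_fintype_card,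
      mul_comm, Finset.filter_ne']

theorem mem_affineRelationSet_of_sum_smul_eq_zero {A : ι × κ → E} {t : ι → ℝ} {v : κ → 𝕜}
    (hA : ∑ c, v c • ∑ j, t j • A (j, c) = 0) {a : ι} (ha : t a ≠ 0) {l : κ} (hl : v l ≠ 0) :
    A ∈ affineRelationSet 𝕜 E (Function.support t \ {a}) a l := by
  obtain ⟨x, hx⟩ := exists_affineChart_eq_inv_smul (s := Function.support t \ {a}) (t := t)
    (by simp) (by simp) ha
  obtain ⟨y, hy⟩ := exists_affineChart_eq_inv_smul (s := {l}ᶜ) (t := v)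
    (by simp) (fun c _ => em (c = l)) hl
  refine ⟨(x, y), ?_⟩
  simp only [hx, hy, Pi.smul_apply]
  calc ∑ i : ι × κ, (((t a)⁻¹ • t i.1) • (v l)⁻¹ • v i.2) • A i
      = (t a)⁻¹ • (v l)⁻¹ • ∑ c, v c • ∑ j, t j • A (j, c) := by
        simp only [Fintype.sum_prod_type_right, Finset.smul_sum]
        refine Finset.sum_congr rfl fun c _ => Finset.sum_congr rfl fun j _ => ?_
        rw [smul_assoc, smul_assoc, smul_assoc, smul_comm (t j), smul_comm (t j)]
    _ = 0 := by rw [hA, smul_zero, smul_zero]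

theorem dense_setOf_forall_linearIndependent_sum_smul [FiniteDimensional 𝕜 E] {r : ℕ}
    (hr : r + finrank ℝ 𝕜 * Fintype.card κ < finrank ℝ 𝕜 * (finrank 𝕜 E + 1)) :
    Dense {A : ι × κ → E | ∀ t : ι → ℝ, t ≠ 0 → (Function.support t).ncard ≤ r + 1 →
      LinearIndependent 𝕜 fun c => ∑ j, t j • A (j, c)} := by
  have : FiniteDimensional ℝ E := .trans ℝ 𝕜 E
  let Q := {q : Set ι × ι × κ // q.2.1 ∉ q.1 ∧ q.1.ncard ≤ r}
  have hQ (q : Q) :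
      dimH (affineRelationSet 𝕜 E q.1.1 q.1.2.1 q.1.2.2) < finrank ℝ (ι × κ → E) := by
    obtain ⟨⟨s, a, l⟩, ha, hs⟩ := q
    have hκ : 1 ≤ Fintype.card κ := Fintype.card_pos_iff.2 ⟨l⟩
    refine dimH_affineRelationSet_lt ha l ?_
    rw [← finrank_mul_finrank ℝ 𝕜 E]
    zify [hκ] at hr hs ⊢
    linarith
  refine (dense_compl_iUnion_of_dimH_lt_finrank hQ).mono fun A hA t ht htr => ?_
  by_contra hdep
  obtain ⟨v, hv, l, hl⟩ := Fintype.not_linearIndependent_iff.1 hdep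
  obtain ⟨a, ha⟩ := Function.ne_iff.1 ht
  have hcard : (Function.support t \ {a}).ncard ≤ r := by
    rw [ncard_sdiff_singleton_of_mem ha]
    omega
  exact hA (mem_iUnion.2 ⟨⟨(Function.support t \ {a}, a, l), by simp, hcard⟩,
    mem_affineRelationSet_of_sum_smul_eq_zero hv ha hl⟩)

end GeneralPosition

section Perturbation

variable {X : Type*} [TopologicalSpace X] [CompactSpace X] [NormalSpace X]

theorem CoveringDimLE.exists_partitionOfUnity {d : ℕ} (hX : CoveringDimLE X d) {ι : Type*}
    {U : ι → Set X} (hU : ∀ i, IsOpen (U i)) (hUX : ⋃ i, U i = univ) :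
    ∃ (V : Finset (Set X)) (f : PartitionOfUnity V X univ),
      (∀ v, ∃ i, Function.support (f v) ⊆ U i) ∧
        ∀ x, (Function.support fun v => f v x).ncard ≤ d + 1 := by
  obtain ⟨V₀, hV₀o, hV₀X, hV₀U, hV₀d⟩ := hX (range U) (forall_mem_range.2 hU) hUX
  obtain ⟨V, hVV₀, hV, hVX⟩ := isCompact_univ.elim_finite_subcover_image (b := V₀) (c := id) hV₀o
    (by rw [← hV₀X, sUnion_eq_biUnion]; rfl)
  lift V to Finset (Set X) using hV
  obtain ⟨f, hf⟩ := PartitionOfUnity.exists_isSubordinate isClosed_univ (fun v : V => v.1)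
    (fun v => hV₀o v (hVV₀ v.2)) (by simpa [iUnion_subtype] using hVX)
  have hfV (v : V) : Function.support (f v) ⊆ v := (subset_tsupport _).trans (hf v)
  refine ⟨V, f, fun v => ?_, fun x => ?_⟩
  · obtain ⟨_, ⟨i, rfl⟩, hi⟩ := hV₀U v (hVV₀ v.2)
    exact ⟨i, (hfV v).trans hi⟩
  · have hmaps : ∀ v ∈ Function.support fun v => f v x, v.1 ∈ {v ∈ V₀ | x ∈ v} :=
      fun v hv => ⟨hVV₀ v.2, hfV v hv⟩
    exact (ncard_le_ncard_of_injOn _ hmaps Subtype.val_injective.injOn (hV₀d x).1).trans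
      (hV₀d x).2

variable {𝕜 E κ : Type*} [RCLike 𝕜] [NormedAddCommGroup E] [NormedSpace 𝕜 E]
  [FiniteDimensional 𝕜 E] [Fintype κ]

theorem CoveringDimLE.exists_continuous_dist_lt_linearIndependent [NormedSpace ℝ E]
    [IsScalarTower ℝ 𝕜 E] {d : ℕ} (hX : CoveringDimLE X d)
    (hd : d + finrank ℝ 𝕜 * Fintype.card κ < finrank ℝ 𝕜 * (finrank 𝕜 E + 1))
    {S : X → κ → E} (hS : Continuous S) {ε : ℝ} (hε : 0 < ε) :
    ∃ S' : X → κ → E, Continuous S' ∧ (∀ x, dist (S' x) (S x) < ε) ∧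
      ∀ x, LinearIndependent 𝕜 (S' x) := by
  obtain ⟨V, f, hfS, hfd⟩ := hX.exists_partitionOfUnity (U := fun c => S ⁻¹' Metric.ball c (ε / 2))
    (fun c => Metric.isOpen_ball.preimage hS)
    (iUnion_eq_univ_iff.2 fun x => ⟨S x, Metric.mem_ball_self (half_pos hε)⟩)
  choose c hc using hfS
  obtain ⟨A, hA, hAc⟩ := (dense_setOf_forall_linearIndependent_sum_smul (ι := V) hd).exists_dist_lt
    (fun q => c q.1 q.2) (half_pos hε)
  have hf1 (x : X) : ∑ v, f v x = 1 := by
    rw [← finsum_eq_sum_of_fintype, f.sum_eq_one (mem_univ x)]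
  refine ⟨fun x => ∑ v, f v x • fun k => A (v, k), by fun_prop, fun x => ?_, fun x => ?_⟩
  · beta_reduce
    rw [← finsum_eq_sum_of_fintype, ← Metric.mem_ball]
    refine f.finsum_smul_mem_convex (g := fun v _ k => A (v, k)) (mem_univ x) (fun v hv => ?_)
      (convex_ball (S x) ε)
    have hcx : dist (S x) (c v) < ε / 2 := hc v hv
    have hAv : dist (fun k => A (v, k)) (c v) < ε / 2 := by
      rw [dist_comm, dist_pi_lt_iff (half_pos hε)] at hAc
      exact (dist_pi_lt_iff (half_pos hε)).2 fun k => hAc (v, k)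
    rw [Metric.mem_ball]
    linarith [dist_triangle_right (fun k => A (v, k)) (S x) (c v)]
  · have hfx : (fun v => f v x) ≠ 0 := fun h => by
      simpa [congrFun h] using hf1 x
    convert hA _ hfx (hfd x) using 2
    simp

theorem CoveringDimLE.exists_continuous_linearIndependent_add {F : Type*}
    [NormedAddCommGroup F] [NormedSpace 𝕜 F] {d : ℕ} (hX : CoveringDimLE X d)
    (hd : d + finrank ℝ 𝕜 * Fintype.card κ < finrank ℝ 𝕜 * (finrank 𝕜 E + 1))
    (L : F →L[𝕜] E) {H : X → E →L[𝕜] F} (hH : Continuous H) {T : X → κ → F}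
    (hT : Continuous T) {K : Set X} (hK : IsCompact K)
    (hTK : ∀ x ∈ K, LinearIndependent 𝕜 (T x)) :
    ∃ D : X → κ → E, Continuous D ∧ ∀ x, x ∈ K ∨ L ∘L H x = .id 𝕜 E →
      LinearIndependent 𝕜 fun c => T x c + H x (D x c) := by
  let : NormedSpace ℝ E := .restrictScalars ℝ 𝕜 E
  have : IsScalarTower ℝ 𝕜 E := .restrictScalars ℝ 𝕜 E
  have hsmall : ∀ᶠ D : κ → E in 𝓝 0, ∀ x ∈ K,
      LinearIndependent 𝕜 fun c => T x c + H x (D c) := by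
    refine hK.eventually_forall_of_forall_eventually fun x hx => ?_
    have hcont : Continuous fun z : (κ → E) × X => fun c => T z.2 c + H z.2 (z.1 c) := by
      fun_prop
    refine hcont.continuousAt.eventually_mem (isOpen_setOfPred_linearIndependent.mem_nhds ?_)
    simpa using hTK x hx
  obtain ⟨ε, hε, hεD⟩ := Metric.eventually_nhds_iff.1 hsmall
  obtain ⟨S, hS, hST, hSi⟩ := hX.exists_continuous_dist_lt_linearIndependent hd
    (S := fun x c => L (T x c)) (by fun_prop) hε
  -- Where `L ∘ H = id`, the map `L` carries `T + H (S - L T)` to `S`.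
  refine ⟨fun x c => S x c - L (T x c), by fun_prop, ?_⟩
  rintro x (hx | hx)
  · refine hεD ?_ x hx
    rw [dist_zero_right]
    exact (dist_eq_norm _ _).symm.trans_lt (hST x)
  · have hLH (u : E) : L (H x u) = u := DFunLike.congr_fun hx u
    refine .of_comp (L : F →ₗ[𝕜] E) ?_
    convert hSi x
    simp [hLH, Function.comp_def]

end Perturbation

section LocalFrame

theorem exists_comp_comp_eq_id {K E F : Type*} [Field K] [AddCommGroup E] [Module K E]
    [AddCommGroup F] [Module K F] {f : E →ₗ[K] F} {m : ℕ} (hm : m ≤ finrank K f.range) :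
    ∃ (L : F →ₗ[K] Fin m → K) (R : (Fin m → K) →ₗ[K] E), L ∘ₗ f ∘ₗ R = .id := by
  obtain ⟨b, hb⟩ := exists_linearIndependent_of_le_finrank hm
  choose w hw using fun c => (b c).2
  have hfw : LinearIndependent K fun c => f (w c) := by
    rw [funext hw]
    exact hb.map' _ (Submodule.ker_subtype _)
  have hker : LinearMap.ker (f ∘ₗ Fintype.linearCombination K w) = ⊥ := by
    refine LinearMap.ker_eq_bot'.2 fun u hu => funext (Fintype.linearIndependent_iff.1 hfw u ?_)
    simpa [Fintype.linearCombination_apply] using hu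
  obtain ⟨L, hL⟩ := LinearMap.exists_leftInverse_of_injective _ hker
  exact ⟨L, _, hL⟩

theorem exists_eventuallyEq_one_continuous_smul {X 𝕜 M : Type*} [TopologicalSpace X]
    [CompactSpace X] [R1Space X] [RCLike 𝕜] [TopologicalSpace M] [AddCommGroup M] [Module 𝕜 M]
    [ContinuousSMul 𝕜 M] {U : Set X} (hU : IsOpen U) {x₀ : X} (hx₀ : x₀ ∈ U) {g : X → M}
    (hg : ContinuousOn g U) :
    ∃ χ : X → 𝕜, χ =ᶠ[𝓝 x₀] 1 ∧ Function.support χ ⊆ U ∧ Continuous fun x => χ x • g x := by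
  obtain ⟨C, hC, hCc, hCU⟩ := exists_mem_nhds_isClosed_subset (hU.mem_nhds hx₀)
  obtain ⟨f, hfU, hfC, -⟩ :=
    exists_tsupport_one_of_isOpen_isClosed hU isClosed_closure.isCompact hCc hCU
  let χ (x : X) : 𝕜 := (f x : 𝕜)
  have hχ : Continuous χ := RCLike.continuous_ofReal.comp f.continuous
  have hχU : tsupport χ ⊆ U :=
    (closure_mono (Function.support_comp_subset RCLike.ofReal_zero f)).trans hfU
  refine ⟨χ, ?_, (subset_tsupport _).trans hχU, ?_⟩
  · filter_upwards [hC] with x hx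
    simp [χ, hfC hx]
  · refine (hχ.continuousOn.smul hg).continuous_of_tsupport_subset hU ?_
    exact (tsupport_smul_subset_left _ _).trans hχU

variable {X : Type*} [TopologicalSpace X] {𝕜 F : Type*} [RCLike 𝕜] [NormedAddCommGroup F]
  [NormedSpace 𝕜 F]

/-- Near `x₀`, the family of subspaces `V` contains a continuously varying `m`-dimensional
subspace, parametrized by `H x` with a left inverse `L` that does not depend on `x`. Outside a
neighbourhood of `x₀` the map `H x` is only required to take values in `V x`. -/
def HasLocalFrame (V : X → Submodule 𝕜 F) (m : ℕ) (x₀ : X) : Prop :=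
  ∃ (L : F →L[𝕜] (Fin m → 𝕜)) (H : X → (Fin m → 𝕜) →L[𝕜] F), Continuous H ∧
    (∀ᶠ x in 𝓝 x₀, L ∘L H x = .id 𝕜 _) ∧ ∀ x u, H x u ∈ V x

theorem hasLocalFrame_of_continuousOn [CompactSpace X] [R1Space X] [FiniteDimensional 𝕜 F]
    {G : Type*} [NormedAddCommGroup G] [NormedSpace 𝕜 G] {V : X → Submodule 𝕜 F} {m : ℕ}
    {U : Set X} (hU : IsOpen U) {x₀ : X} (hx₀ : x₀ ∈ U) {p : X → G →L[𝕜] F}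
    (hp : ContinuousOn p U) (hpV : ∀ x ∈ U, (p x).range ≤ V x)
    (hm : m ≤ finrank 𝕜 (p x₀).range) : HasLocalFrame V m x₀ := by
  obtain ⟨L', R', hLR⟩ := exists_comp_comp_eq_id hm
  let L : F →L[𝕜] (Fin m → 𝕜) := L'.toContinuousLinearMap
  let R : (Fin m → 𝕜) →L[𝕜] G := R'.toContinuousLinearMap
  let N (x : X) : (Fin m → 𝕜) →L[𝕜] (Fin m → 𝕜) := L ∘L p x ∘L R
  have hN₀ : 1 = N x₀ := ContinuousLinearMap.ext fun u => (DFunLike.congr_fun hLR u).symm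
  have hN : ContinuousOn N U := by fun_prop
  let U' := U ∩ N ⁻¹' {a | IsUnit a}
  have hU' : IsOpen U' := hN.isOpen_inter_preimage hU Units.isOpen
  have hx₀' : x₀ ∈ U' := ⟨hx₀, show IsUnit (N x₀) from hN₀ ▸ isUnit_one⟩
  have hinv : ContinuousOn (fun x => Ring.inverse (N x)) U' := fun x hx => by
    obtain ⟨a, ha⟩ := hx.2
    have ha' := NormedRing.inverse_continuousAt a
    rw [ha] at ha'
    exact ha'.comp_continuousWithinAt (hN.mono inter_subset_left x hx)
  have hg : ContinuousOn (fun x => (p x ∘L R) ∘L Ring.inverse (N x)) U' :=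
    ((hp.mono inter_subset_left).clm_comp continuousOn_const).clm_comp hinv
  obtain ⟨χ, hχ₁, hχU, hχ⟩ := exists_eventuallyEq_one_continuous_smul (𝕜 := 𝕜) hU' hx₀' hg
  refine ⟨L, _, hχ, ?_, fun x u => ?_⟩
  · filter_upwards [hχ₁, hU'.mem_nhds hx₀'] with x hx hxU
    rw [hx, Pi.one_apply, one_smul]
    exact Ring.mul_inverse_cancel _ hxU.2
  · by_cases hx : χ x = 0
    · simp [hx]
    · exact (V x).smul_mem _ (hpV x (hχU hx).1 ⟨_, rfl⟩)

theorem CoveringDimLE.exists_continuous_linearIndependent_mem [CompactSpace X] [NormalSpace X]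
    {κ : Type*} [Fintype κ] {d m : ℕ} (hX : CoveringDimLE X d)
    (hd : d + finrank ℝ 𝕜 * Fintype.card κ < finrank ℝ 𝕜 * (m + 1))
    {V : X → Submodule 𝕜 F} (hV : ∀ x, HasLocalFrame V m x) :
    ∃ T : X → κ → F, Continuous T ∧ (∀ x c, T x c ∈ V x) ∧ ∀ x, LinearIndependent 𝕜 (T x) := by
  choose L H hH hLH hHV using hV
  let C (a : X) : Set X := {x | L a ∘L H a x = .id 𝕜 _}
  have hC (a : X) : IsClosed (C a) :=
    isClosed_eq (continuous_const.clm_comp (hH a)) continuous_const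
  have hfin (s : Finset X) : ∃ T : X → κ → F, Continuous T ∧ (∀ x c, T x c ∈ V x) ∧
      ∀ x ∈ ⋃ a ∈ s, C a, LinearIndependent 𝕜 (T x) := by
    classical
    induction s using Finset.induction with
    | empty => exact ⟨0, continuous_zero, fun x _ => (V x).zero_mem, by simp⟩
    | insert a s _ ih =>
      obtain ⟨T, hT, hTV, hTs⟩ := ih
      have hK : IsCompact (⋃ a ∈ s, C a) := s.isCompact_biUnion fun a _ => (hC a).isCompact
      obtain ⟨D, hD, hDi⟩ := hX.exists_continuous_linearIndependent_add (by simpa using hd)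
        (L a) (hH a) hT hK hTs
      refine ⟨fun x c => T x c + H a x (D x c), ?_, fun x c => ?_, fun x hx => hDi x ?_⟩
      · have hHa := hH a
        fun_prop
      · exact (V x).add_mem (hTV x c) (hHV a x _)
      · rw [Finset.set_biUnion_insert] at hx
        exact hx.symm
  obtain ⟨s, hs⟩ := CompactSpace.elim_nhds_subcover C hLH
  obtain ⟨T, hT, hTV, hTs⟩ := hfin s
  exact ⟨T, hT, hTV, fun x => hTs x (hs ▸ mem_univ x)⟩

end LocalFrame

section ColumnProjection

open Matrix
open scoped ComplexOrder

variable {𝕜 n κ : Type*} [RCLike 𝕜] [Fintype n] [Fintype κ] [DecidableEq κ]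

/-- The orthogonal projection onto the column space of `T`, when the columns of `T` are linearly
independent; otherwise the Gram matrix `Tᴴ * T` is singular and the value is `0`. -/
noncomputable def columnProjection (T : Matrix n κ 𝕜) : Matrix n n 𝕜 :=
  T * (Tᴴ * T)⁻¹ * Tᴴ

variable {T : Matrix n κ 𝕜}

theorem isUnit_det_conjTranspose_mul_self (hT : LinearIndependent 𝕜 T.col) :
    IsUnit (Tᴴ * T).det :=
  (Matrix.isUnit_iff_isUnit_det _).1
    (PosDef.conjTranspose_mul_self T (mulVec_injective_iff.2 hT)).isUnit

theorem columnProjection_mul_self (hT : LinearIndependent 𝕜 T.col) :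
    columnProjection T * T = T := by
  rw [columnProjection, Matrix.mul_assoc, Matrix.mul_assoc,
    nonsing_inv_mul _ (isUnit_det_conjTranspose_mul_self hT), Matrix.mul_one]

theorem isIdempotentElem_columnProjection (hT : LinearIndependent 𝕜 T.col) :
    IsIdempotentElem (columnProjection T) := by
  rw [IsIdempotentElem]
  nth_rw 2 [columnProjection]
  rw [← Matrix.mul_assoc, ← Matrix.mul_assoc, columnProjection_mul_self hT, columnProjection]

theorem isSelfAdjoint_columnProjection (T : Matrix n κ 𝕜) :
    IsSelfAdjoint (columnProjection T) := by
  simp [IsSelfAdjoint, star_eq_conjTranspose, columnProjection, conjTranspose_nonsing_inv,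
    Matrix.mul_assoc]

theorem range_mulVecLin_columnProjection (hT : LinearIndependent 𝕜 T.col) :
    (columnProjection T).mulVecLin.range = Submodule.span 𝕜 (range T.col) := by
  rw [← range_mulVecLin]
  refine le_antisymm ?_ ?_
  · rw [columnProjection, Matrix.mul_assoc, mulVecLin_mul]
    exact LinearMap.range_comp_le_range _ _
  · conv_lhs => rw [← columnProjection_mul_self hT, mulVecLin_mul]
    exact LinearMap.range_comp_le_range _ _

theorem rank_columnProjection (hT : LinearIndependent 𝕜 T.col) :
    (columnProjection T).rank = Fintype.card κ := by
  rw [rank, range_mulVecLin_columnProjection hT, finrank_span_eq_card hT]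

theorem continuous_columnProjection {X : Type*} [TopologicalSpace X] {T : X → Matrix n κ 𝕜}
    (hT : Continuous T) (hTi : ∀ x, LinearIndependent 𝕜 (T x).col) :
    Continuous fun x => columnProjection (T x) := by
  have hinv : Continuous fun x => ((T x)ᴴ * T x)⁻¹ := by
    have hgram : Continuous fun x => (T x)ᴴ * T x := hT.matrix_conjTranspose.matrix_mul hT
    refine continuous_iff_continuousAt.2 fun x => ?_
    refine ContinuousAt.comp (continuousAt_matrix_inv _ ?_) hgram.continuousAt
    exact NormedRing.inverse_continuousAt (isUnit_det_conjTranspose_mul_self (hTi x)).unit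
  exact (hT.matrix_mul hinv).matrix_mul hT.matrix_conjTranspose

end ColumnProjection

theorem continuous_mulVecLin_toContinuousLinearMap {𝕜 n m : Type*} [RCLike 𝕜] [Finite n]
    [Fintype m] : Continuous fun A : Matrix n m 𝕜 => A.mulVecLin.toContinuousLinearMap := by
  classical
  exact (Matrix.toLin' ≪≫ₗ LinearMap.toContinuousLinearMap :
    Matrix n m 𝕜 ≃ₗ[𝕜] _).toLinearMap.continuous_of_finiteDimensional

theorem selection_principle_general {X 𝕜 n m : Type*} [TopologicalSpace X] [CompactSpace X]
    [R1Space X] [RCLike 𝕜] [Fintype n] [Fintype m] {k k' d : ℕ} (hX : CoveringDimLE X d)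
    (hd : d + finrank ℝ 𝕜 * k < finrank ℝ 𝕜 * (k' + 1)) {ι : Type*} {W : ι → Set X}
    (hWopen : ∀ i, IsOpen (W i)) (hWcover : ⋃ i, W i = univ) {A : ι → X → Matrix n m 𝕜}
    (hAcont : ∀ i, ContinuousOn (A i) (W i)) (hArank : ∀ i, ∀ x ∈ W i, k' ≤ (A i x).rank) :
    ∃ p : X → Matrix n n 𝕜, Continuous p ∧
      (∀ x, IsIdempotentElem (p x) ∧ IsSelfAdjoint (p x)) ∧ (∀ x, (p x).rank = k) ∧
      ∀ x, (p x).mulVecLin.range ≤ ⨆ i ∈ {i | x ∈ W i}, (A i x).mulVecLin.range := by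
  have hframe (x₀ : X) :
      HasLocalFrame (fun x => ⨆ i ∈ {i | x ∈ W i}, (A i x).mulVecLin.range) k' x₀ := by
    obtain ⟨i, hi⟩ := mem_iUnion.1 (hWcover ▸ mem_univ x₀)
    exact hasLocalFrame_of_continuousOn (hWopen i) hi
      (continuous_mulVecLin_toContinuousLinearMap.comp_continuousOn (hAcont i))
      (fun x hx => le_iSup₂_of_le i hx le_rfl) (hArank i x₀ hi)
  obtain ⟨T, hT, hTV, hTi⟩ :=
    hX.exists_continuous_linearIndependent_mem (κ := Fin k) (by simpa using hd) hframe
  let B (x : X) : Matrix n (Fin k) 𝕜 := (Matrix.of (T x))ᵀ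
  have hB (x : X) : LinearIndependent 𝕜 (B x).col := hTi x
  refine ⟨fun x => columnProjection (B x), continuous_columnProjection (by fun_prop) hB,
    fun x => ⟨isIdempotentElem_columnProjection (hB x), isSelfAdjoint_columnProjection _⟩,
    fun x => (rank_columnProjection (hB x)).trans (Fintype.card_fin k), fun x => ?_⟩
  rw [range_mulVecLin_columnProjection (hB x), Submodule.span_le]
  exact range_subset_iff.2 (hTV x)

/- Selection principle (Dădărlat–Nagy–Némethi–Pasnicu, Proposition 3.2):
given an open cover `W` of a compact metric space `X` of covering dimension
`≤ 2(k'-k) - 1` and continuous projection-valued maps `pW i` on `W i` of rank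
`≥ k'`, there is a global continuous projection-valued map `p` of rank `≥ k`
with `p x` dominated by the join of the `pW i x` (expressed via ranges). -/
theorem selection_principle {X : Type*} [MetricSpace X] [CompactSpace X]
    (k k' n : ℕ) (hk : 1 ≤ k) (hk' : k < k')
    (hdim : CoveringDimLE X (2 * (k' - k) - 1))
    {ι : Type*} (W : ι → Set X) (hWopen : ∀ i, IsOpen (W i))
    (hWcover : ⋃ i, W i = Set.univ)
    (pW : ι → X → Matrix (Fin n) (Fin n) ℂ)
    (hpWcont : ∀ i, ContinuousOn (pW i) (W i))
    (hpWproj : ∀ i, ∀ x ∈ W i, IsIdempotentElem (pW i x) ∧ IsSelfAdjoint (pW i x))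
    (hpWrank : ∀ i, ∀ x ∈ W i, k' ≤ (pW i x).rank) :
    ∃ p : X → Matrix (Fin n) (Fin n) ℂ, Continuous p ∧
      (∀ x, IsIdempotentElem (p x) ∧ IsSelfAdjoint (p x)) ∧
      (∀ x, k ≤ (p x).rank) ∧
      ∀ x, LinearMap.range (Matrix.mulVecLin (p x)) ≤
        ⨆ i ∈ {i | x ∈ W i}, LinearMap.range (Matrix.mulVecLin (pW i x)) := by
  obtain ⟨p, hp, hproj, hrank, hrange⟩ := selection_principle_general (k := k) (k' := k') hdim
    (by rw [Complex.finrank_real_complex]; omega) hWopen hWcover hpWcont hpWrank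
  exact ⟨p, hp, hproj, fun x => (hrank x).ge, hrange⟩
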